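/- arXiv:2502.15215 — 2 statements merged into one kernel-verified Lean document; each statement's English description precedes it below -/
import Mathlib

section
/- Let f(x) = β_0 + ∑_{S ⊆ {1,…,p}, 1 ≤ |S| ≤ d} f_S(x_S), where each f_S is bounded measurable, depends only on the coordinates indexed by S, and satisfies the sum-to-zero condition with respect to (μ_j)_{j∈S}. Then for every T ⊆ {1,…,p} and every x ∈ X, v_f(x_T) = β_0 + ∑_{S ⊆ T, 1 ≤ |S| ≤ d} f_S(x_S). -/
/-!
By linearity the value function is the sum of the integrals of the components `f S`, with the
coordinates in `T` frozen at `x`. If `S ⊆ T`, the integrand is the constant `f S x`. Otherwise pick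
`j ∈ S \ T`: resampling the coordinate `j` independently leaves the product measure unchanged
(`measurePreserving_update`), so by Fubini the integral over the coordinate `j` may be
taken first (`integral_pi_eq_zero_of_update`), and there it vanishes by the sum-to-zero condition.
-/

open MeasureTheory

/-- Replacing one coordinate of a product-distributed vector by an independent copy does not change
its law. -/
lemma measurePreserving_update {ι : Type*} [Fintype ι] [DecidableEq ι]
    (μ : ι → Measure ℝ) [∀ j, IsProbabilityMeasure (μ j)] (j : ι) :
    MeasurePreserving (fun q : (ι → ℝ) × ℝ => Function.update q.1 j q.2)
      ((Measure.pi μ).prod (μ j)) (Measure.pi μ) := by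
  have hm : Measurable (fun q : (ι → ℝ) × ℝ => Function.update q.1 j q.2) := by
    refine measurable_pi_iff.2 fun i => ?_
    by_cases h : i = j
    · subst h
      simpa using measurable_snd
    · simp only [Function.update_of_ne h]
      exact (measurable_pi_apply i).comp measurable_fst
  refine ⟨hm, (Measure.pi_eq fun s hs => ?_).symm⟩
  rw [Measure.map_apply hm (MeasurableSet.univ_pi hs)]
  have hpre : (fun q : (ι → ℝ) × ℝ => Function.update q.1 j q.2) ⁻¹' Set.univ.pi s
      = (Set.univ.pi (Function.update s j Set.univ)) ×ˢ s j := by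
    ext q
    simp only [Set.mem_preimage, Set.mem_pi, Set.mem_univ, true_imp_iff, Set.mem_prod]
    constructor
    · intro h
      refine ⟨fun i => ?_, by simpa using h j⟩
      by_cases hi : i = j
      · subst hi
        simp
      · simpa [Function.update_of_ne hi] using h i
    · rintro ⟨h1, h2⟩ i
      by_cases hi : i = j
      · subst hi
        simpa using h2
      · simpa [Function.update_of_ne hi] using h1 i
  rw [hpre, Measure.prod_prod, Measure.pi_pi,
    ← Finset.mul_prod_erase Finset.univ _ (Finset.mem_univ j),
    ← Finset.mul_prod_erase Finset.univ (fun i => μ i (s i)) (Finset.mem_univ j)]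
  simp only [Function.update_self, measure_univ, one_mul]
  rw [mul_comm]
  congr 1
  refine Finset.prod_congr rfl fun i hi => ?_
  rw [Function.update_of_ne (Finset.ne_of_mem_erase hi)]

/-- Sum-to-zero in one coordinate, for every value of the others, kills the integral against the
product measure. -/
lemma integral_pi_eq_zero_of_update {ι : Type*} [Fintype ι] [DecidableEq ι]
    (μ : ι → Measure ℝ) [∀ j, IsProbabilityMeasure (μ j)] (j : ι) (g : (ι → ℝ) → ℝ)
    (hg : Integrable g (Measure.pi μ))
    (h0 : ∀ z, ∫ t, g (Function.update z j t) ∂(μ j) = 0) :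
    ∫ z, g z ∂(Measure.pi μ) = 0 := by
  have hmp := measurePreserving_update μ j
  have hint := (hmp.integrable_comp hg.aestronglyMeasurable).2 hg
  rw [← hmp.map_eq, integral_map hmp.measurable.aemeasurable
    (by rw [hmp.map_eq]; exact hg.aestronglyMeasurable)]
  refine (integral_prod _ hint).trans ?_
  simp [h0]

/-- For f(x) = β₀ + ∑_{1 ≤ |S| ≤ d} f_S(x_S) with sum-to-zero components,
the value function satisfies v_f(x_T) = β₀ + ∑_{S ⊆ T, 1 ≤ |S| ≤ d} f_S(x_S). -/
theorem value_function_of_anova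
    (p d : ℕ) (hp : 1 ≤ p) (hd1 : 1 ≤ d) (hdp : d ≤ p)
    (X : Fin p → Set ℝ) (hXmeas : ∀ j, MeasurableSet (X j))
    (μ : Fin p → Measure ℝ) [hprob : ∀ j, IsProbabilityMeasure (μ j)]
    (hsupp : ∀ j, μ j (X j)ᶜ = 0)
    (β₀ : ℝ)
    (f : Finset (Fin p) → (Fin p → ℝ) → ℝ)
    (hmeas : ∀ S : Finset (Fin p), 1 ≤ S.card → S.card ≤ d → Measurable (f S))
    (hbdd : ∀ S : Finset (Fin p), 1 ≤ S.card → S.card ≤ d → ∃ C : ℝ, ∀ x, |f S x| ≤ C)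
    (hdep : ∀ S : Finset (Fin p), 1 ≤ S.card → S.card ≤ d →
      ∀ x y : Fin p → ℝ, (∀ j ∈ S, x j = y j) → f S x = f S y)
    (hstz : ∀ S : Finset (Fin p), 1 ≤ S.card → S.card ≤ d → ∀ j ∈ S,
      ∀ z : Fin p → ℝ, ∫ t in X j, f S (Function.update z j t) ∂(μ j) = 0)
    (F : (Fin p → ℝ) → ℝ)
    (hF : ∀ y, F y = β₀ + ∑ S ∈ Finset.univ.powerset.filter
        (fun S : Finset (Fin p) => 1 ≤ S.card ∧ S.card ≤ d), f S y) :
    ∀ (T : Finset (Fin p)) (x : Fin p → ℝ), (∀ i, x i ∈ X i) →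
      (∫ z, F (fun i => if i ∈ T then x i else z i) ∂(Measure.pi μ))
        = β₀ + ∑ S ∈ T.powerset.filter
            (fun S : Finset (Fin p) => 1 ≤ S.card ∧ S.card ≤ d), f S x := by
  intro T x _
  have hfreeze : Measurable (fun z : Fin p → ℝ => fun i => if i ∈ T then x i else z i) := by
    refine measurable_pi_iff.2 fun i => ?_
    by_cases h : i ∈ T
    · simp [h]
    · simpa [h] using measurable_pi_apply i
  have hint : ∀ S : Finset (Fin p), 1 ≤ S.card → S.card ≤ d →
      Integrable (fun z => f S (fun i => if i ∈ T then x i else z i)) (Measure.pi μ) := by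
    intro S h1 h2
    obtain ⟨C, hC⟩ := hbdd S h1 h2
    exact Integrable.of_bound ((hmeas S h1 h2).comp hfreeze).aestronglyMeasurable C
      (Filter.Eventually.of_forall fun z => hC _)
  have hin : ∀ S : Finset (Fin p), 1 ≤ S.card → S.card ≤ d → S ⊆ T →
      ∫ z, f S (fun i => if i ∈ T then x i else z i) ∂(Measure.pi μ) = f S x := by
    intro S h1 h2 hST
    have h : ∀ z : Fin p → ℝ, f S (fun i => if i ∈ T then x i else z i) = f S x := fun z =>
      hdep S h1 h2 _ _ fun j hj => by simp [hST hj]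
    simp [h]
  have hout : ∀ S : Finset (Fin p), 1 ≤ S.card → S.card ≤ d → ¬ S ⊆ T →
      ∫ z, f S (fun i => if i ∈ T then x i else z i) ∂(Measure.pi μ) = 0 := by
    intro S h1 h2 hST
    obtain ⟨j, hjS, hjT⟩ := Finset.not_subset.1 hST
    refine integral_pi_eq_zero_of_update μ j _ (hint S h1 h2) fun z => ?_
    -- Since `j ∉ T`, freezing the coordinates in `T` commutes with updating the coordinate `j`.
    have hcomm : ∀ t : ℝ, (fun i => if i ∈ T then x i else Function.update z j t i)
        = Function.update (fun i => if i ∈ T then x i else z i) j t := by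
      intro t
      ext i
      by_cases hi : i = j
      · subst hi
        simp [hjT]
      · simp [Function.update_of_ne hi]
    have hres : (μ j).restrict (X j) = μ j :=
      Measure.restrict_eq_self_of_ae_mem (mem_ae_iff.2 (hsupp j))
    have h := hstz S h1 h2 j hjS (fun i => if i ∈ T then x i else z i)
    rw [hres] at h
    simpa only [hcomm] using h
  simp only [hF]
  rw [integral_add (integrable_const _) (integrable_finsetSum _ fun S hS => by
      have := (Finset.mem_filter.1 hS).2
      exact hint S this.1 this.2),
    integral_finsetSum _ fun S hS => by
      have := (Finset.mem_filter.1 hS).2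
      exact hint S this.1 this.2]
  simp only [integral_const, probReal_univ, one_smul]
  congr 1
  symm
  refine (Finset.sum_congr rfl fun S hS => ?_).trans
    (Finset.sum_subset (Finset.filter_subset_filter _
      (Finset.powerset_mono.2 (Finset.subset_univ T))) fun S hS hS' => ?_)
  · obtain ⟨h0, h1, h2⟩ := Finset.mem_filter.1 hS
    exact (hin S h1 h2 (Finset.mem_powerset.1 h0)).symm
  · obtain ⟨_, h1, h2⟩ := Finset.mem_filter.1 hS
    exact hout S h1 h2 fun h =>
      hS' (Finset.mem_filter.2 ⟨Finset.mem_powerset.2 h, h1, h2⟩)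
end

section
/- Suppose each μ_j (j ∈ {1,…,p}) is a probability measure on a bounded interval X_j ⊆ ℝ whose density with respect to Lebesgue measure is bounded below and above by positive constants. Let g_0(x) = ∑_{S ⊆ {1,…,p}, 1 ≤ |S| ≤ d} g_{0,S}(x_S), where each g_{0,S} is L-Lipschitz and satisfies the sum-to-zero condition with respect to (μ_j)_{j∈S}. Then there exists a constant C > 0 such that for every choice of positive integers (K_S)_{S : 1 ≤ |S| ≤ d} there exist coefficients β_{S,k} ∈ ℝ and parameters θ_{S,k} (for S with 1 ≤ |S| ≤ d and k ∈ {1,…,K_S}) such that sup_{x ∈ X} |g_0(x) − ∑_{S : 1 ≤ |S| ≤ d} ∑_{k=1}^{K_S} β_{S,k} φ_S(x_S|θ_{S,k})| < C · ∑_{S : 1 ≤ |S| ≤ d} |S| / (K_S^{1/|S|} + 1). -/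
/-!
Up to the factor `-1/η`, the basis network `φ(· | b, γ)` is the centred sigmoid `σ - ∫ σ dμ`. In one
variable, the differences of consecutive sigmoids placed at `m` equidistant centres (together with
the constants `1` and `0` at the two ends) form a nonnegative partition of unity with `m + 1`
members `b_k`; for a small enough width, `A f = ∑ f(t_k) b_k` approximates an `L`-Lipschitz `f` with
error `3 L h`, where `h` is the mesh. If `f` has mean zero, then `∫ A f = ∫ (A f - f)` is just as
small, so replacing each `b_k` by `B_k = b_k - ∫ b_k`, which lies in the span of the `m` basis
networks, costs a factor `2` only (`exists_quasi_interpolant`).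

The resulting operator `Q f = ∑ f(t_k) B_k` has sup-norm at most `2`. With `Q_j` acting in the
coordinate `j`, an approximant `G` of a component `F` satisfies
`‖Q_j G - F‖ ≤ ‖Q_j (G - F)‖ + ‖Q_j F - F‖ ≤ 2 ‖G - F‖ + O(1/m)`, and induction over the coordinates
in `S` gives an approximant in the product of the one-coordinate spans, that is, a linear
combination of `m ^ |S|` tensor product basis functions (`tensor_approx`). Taking
`m = ⌊K_S^{1/|S|}⌋` (`component_approx`) and summing over `S` yields the theorem.
-/

open MeasureTheory

/-- The sigmoid function σ(t) = 1/(1+exp(−t)). -/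
noncomputable def sigmoid (t : ℝ) : ℝ := 1 / (1 + Real.exp (-t))

/-- η_j(b,γ) = ∫ σ((x−b)/γ) dμ_j(x). -/
noncomputable def eta (μ : Measure ℝ) (b γ : ℝ) : ℝ := ∫ x, sigmoid ((x - b) / γ) ∂μ

/-- c_j(b,γ) = −(1−η_j(b,γ))/η_j(b,γ). -/
noncomputable def cCoef (μ : Measure ℝ) (b γ : ℝ) : ℝ := -(1 - eta μ b γ) / eta μ b γ

/-- The basis neural network φ_j(x|(b,γ)) = (1−σ((x−b)/γ)) + c_j(b,γ)·σ((x−b)/γ). -/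
noncomputable def basisNN (μ : Measure ℝ) (b γ x : ℝ) : ℝ :=
  (1 - sigmoid ((x - b) / γ)) + cCoef μ b γ * sigmoid ((x - b) / γ)

/-! ### The one-dimensional quasi-interpolant -/

theorem sigmoid_pos (t : ℝ) : 0 < sigmoid t := by
  unfold sigmoid; positivity

theorem sigmoid_le_one (t : ℝ) : sigmoid t ≤ 1 := by
  unfold sigmoid
  rw [div_le_one (by positivity)]
  linarith [Real.exp_pos (-t)]

theorem sigmoid_mono : Monotone sigmoid := by
  intro s t h
  unfold sigmoid
  have : Real.exp (-t) ≤ Real.exp (-s) := Real.exp_le_exp.2 (by linarith)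
  exact one_div_le_one_div_of_le (by positivity) (by linarith)

theorem sigmoid_le_exp (t : ℝ) : sigmoid t ≤ Real.exp t := by
  unfold sigmoid
  rw [div_le_iff₀ (by positivity), mul_add, ← Real.exp_add]
  simp [Real.exp_nonneg]

theorem one_sub_sigmoid (t : ℝ) : 1 - sigmoid t = sigmoid (-t) := by
  unfold sigmoid
  have h : Real.exp t ≠ 0 := (Real.exp_pos t).ne'
  rw [neg_neg, Real.exp_neg]
  field_simp
  ring

theorem sigmoid_continuous : Continuous sigmoid := by
  unfold sigmoid
  exact continuous_const.div (by fun_prop) (fun t => by positivity)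

/-- At distance at least `1` to the left of its centre, a sigmoid of width `δ` is at most `δ`. -/
theorem sigmoid_tail {δ t : ℝ} (hδ : 0 < δ) (ht : t ≤ -1) : sigmoid (t / δ) ≤ δ := by
  have h1 : t / δ ≤ -(1 / δ) := by
    rw [← neg_div]; exact div_le_div_of_nonneg_right ht hδ.le
  have h2 : 1 / δ ≤ Real.exp (1 / δ) := by linarith [Real.add_one_le_exp (1 / δ)]
  calc sigmoid (t / δ) ≤ Real.exp (t / δ) := sigmoid_le_exp _
    _ ≤ Real.exp (-(1 / δ)) := Real.exp_le_exp.2 h1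
    _ = (Real.exp (1 / δ))⁻¹ := Real.exp_neg _
    _ ≤ (1 / δ)⁻¹ := inv_anti₀ (by positivity) h2
    _ = δ := by simp

/-- The ladder `1 = s₀ ≥ s₁ ≥ … ≥ s_m ≥ s_{m+1} = 0`, where `s_k` for `1 ≤ k ≤ m` is
the sigmoid of width `γ` centred at `a + k h`. For `h ≥ 0` and `γ > 0` its successive differences form a
nonnegative partition of unity; past `m + 1` it stays `0`. -/
noncomputable def ladder (m : ℕ) (a h γ : ℝ) (k : ℕ) (x : ℝ) : ℝ :=
  if k = 0 then 1 else if k ≤ m then sigmoid ((x - (a + k * h)) / γ) else 0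

theorem ladder_continuous (m : ℕ) (a h γ : ℝ) (k : ℕ) : Continuous (ladder m a h γ k) := by
  unfold ladder
  split_ifs
  · exact continuous_const
  · exact sigmoid_continuous.comp (by fun_prop)
  · exact continuous_const

theorem ladder_nonneg (m : ℕ) (a h γ : ℝ) (k : ℕ) (x : ℝ) : 0 ≤ ladder m a h γ k x := by
  unfold ladder
  split_ifs
  · exact zero_le_one
  · exact (sigmoid_pos _).le
  · exact le_rfl

theorem ladder_le_one (m : ℕ) (a h γ : ℝ) (k : ℕ) (x : ℝ) : ladder m a h γ k x ≤ 1 := by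
  unfold ladder
  split_ifs
  · exact le_rfl
  · exact sigmoid_le_one _
  · exact zero_le_one

theorem ladder_succ_le (m : ℕ) {a h γ : ℝ} (hh : 0 ≤ h) (hγ : 0 < γ) (k : ℕ) (x : ℝ) :
    ladder m a h γ (k + 1) x ≤ ladder m a h γ k x := by
  by_cases hk : k = 0
  · subst hk
    simpa [ladder] using ladder_le_one m a h γ 1 x
  by_cases hkm : k + 1 ≤ m
  · have hkm' : k ≤ m := by omega
    simp only [ladder, hk, hkm, hkm', if_true, if_false, Nat.add_eq_zero_iff, one_ne_zero,
      and_false]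
    apply sigmoid_mono
    apply div_le_div_of_nonneg_right _ hγ.le
    push_cast
    nlinarith
  · have : ladder m a h γ (k + 1) x = 0 := by simp [ladder, hkm]
    rw [this]
    exact ladder_nonneg _ _ _ _ _ _

theorem ladder_zero (m : ℕ) (a h γ x : ℝ) : ladder m a h γ 0 x = 1 := by simp [ladder]

theorem ladder_last (m : ℕ) (a h γ x : ℝ) : ladder m a h γ (m + 1) x = 0 := by simp [ladder]

theorem ladder_integrable (μ : Measure ℝ) [IsProbabilityMeasure μ] (m : ℕ) (a h γ : ℝ) (k : ℕ) :
    Integrable (ladder m a h γ k) μ := by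
  refine Integrable.of_bound (ladder_continuous m a h γ k).aestronglyMeasurable 1 ?_
  filter_upwards with x
  rw [Real.norm_eq_abs, abs_of_nonneg (ladder_nonneg _ _ _ _ _ _)]
  exact ladder_le_one _ _ _ _ _ _

/-- The bump `s_k - s_{k+1}` at the node `a + k h`. -/
noncomputable def bump (m : ℕ) (a h γ : ℝ) (k : ℕ) (x : ℝ) : ℝ :=
  ladder m a h γ k x - ladder m a h γ (k + 1) x

theorem bump_nonneg (m : ℕ) {a h γ : ℝ} (hh : 0 ≤ h) (hγ : 0 < γ) (k : ℕ) (x : ℝ) :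
    0 ≤ bump m a h γ k x := sub_nonneg.2 (ladder_succ_le m hh hγ k x)

theorem sum_bump (m : ℕ) (a h γ x : ℝ) :
    ∑ k ∈ Finset.range (m + 1), bump m a h γ k x = 1 := by
  unfold bump
  rw [Finset.sum_range_sub' (fun k => ladder m a h γ k x)]
  simp [ladder_zero, ladder_last]

theorem bump_integrable (μ : Measure ℝ) [IsProbabilityMeasure μ] (m : ℕ) (a h γ : ℝ) (k : ℕ) :
    Integrable (bump m a h γ k) μ :=
  (ladder_integrable μ m a h γ k).sub (ladder_integrable μ m a h γ (k + 1))

/-- In the unit `h`, a bump is at most `δ` (its relative width) at distance `≥ 2` from its node. -/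
theorem bump_far (m : ℕ) {a h δ x : ℝ} (hh : 0 < h) (hδ : 0 < δ) {k : ℕ} (hk : k ≤ m)
    (hx : x ∈ Set.Icc a (a + m * h)) (hfar : 2 * h ≤ |x - (a + k * h)|) :
    bump m a h (h * δ) k x ≤ δ := by
  have key : ∀ i : ℕ, (x - (a + i * h)) / (h * δ) = ((x - (a + i * h)) / h) / δ := by
    intro i; rw [div_div]
  rcases le_abs'.1 hfar with hl | hr
  · have hk0 : k ≠ 0 := by
      rintro rfl
      have := hx.1
      push_cast at hl
      linarith
    have h1 : bump m a h (h * δ) k x ≤ ladder m a h (h * δ) k x :=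
      sub_le_self _ (ladder_nonneg _ _ _ _ _ _)
    refine h1.trans ?_
    simp only [ladder, hk0, hk, if_true, if_false]
    rw [key]
    apply sigmoid_tail hδ
    rw [div_le_iff₀ hh]
    linarith
  · have hkm : k + 1 ≤ m := by
      by_contra hcon
      have : k = m := by omega
      subst this
      have := hx.2
      linarith
    have h1 : bump m a h (h * δ) k x ≤ 1 - ladder m a h (h * δ) (k + 1) x :=
      sub_le_sub_right (ladder_le_one _ _ _ _ _ _) _
    refine h1.trans ?_
    simp only [ladder, hkm, if_true, if_false, Nat.add_eq_zero_iff, one_ne_zero, and_false]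
    rw [key, one_sub_sigmoid, ← neg_div]
    apply sigmoid_tail hδ
    push_cast
    rw [← neg_div, div_le_iff₀ hh]
    linarith

/-- First absolute moment of the partition of unity: with relative width `1/(m(m+1))`, nodes within
`2h` of `x` contribute at most `2h`, and the others at most `h` altogether. -/
theorem bump_moment {m : ℕ} (hm : 1 ≤ m) {a h x : ℝ} (hh : 0 < h)
    (hx : x ∈ Set.Icc a (a + m * h)) :
    ∑ k ∈ Finset.range (m + 1),
      bump m a h (h * (1 / (m * (m + 1)))) k x * |x - (a + k * h)| ≤ 3 * h := by
  have hm' : (1 : ℝ) ≤ m := by exact_mod_cast hm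
  have hδ : (0 : ℝ) < 1 / (m * (m + 1)) := by positivity
  have hterm : ∀ k ∈ Finset.range (m + 1),
      bump m a h (h * (1 / (m * (m + 1)))) k x * |x - (a + k * h)|
        ≤ 2 * h * bump m a h (h * (1 / (m * (m + 1)))) k x + h / (m + 1) := by
    intro k hk
    have hk' : k ≤ m := by rw [Finset.mem_range] at hk; omega
    have hkr : (k : ℝ) ≤ m := by exact_mod_cast hk'
    have hb := bump_nonneg m (a := a) hh.le (mul_pos hh hδ) k x
    by_cases hfar : 2 * h ≤ |x - (a + k * h)|
    · have h1 := bump_far m hh hδ hk' hx hfar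
      have h2 : |x - (a + k * h)| ≤ m * h := by
        have h3 : (k : ℝ) * h ≤ m * h := mul_le_mul_of_nonneg_right hkr hh.le
        have h4 : 0 ≤ (k : ℝ) * h := by positivity
        rw [abs_le]; constructor <;> linarith [hx.1, hx.2]
      calc _ ≤ (1 / (m * (m + 1))) * (m * h) :=
            mul_le_mul h1 h2 (abs_nonneg _) hδ.le
        _ = h / (m + 1) := by field_simp
        _ ≤ _ := by have : 0 ≤ 2 * h * bump m a h (h * (1 / (m * (m + 1)))) k x := by positivity
                    linarith
    · have h1 : |x - (a + k * h)| ≤ 2 * h := (not_le.1 hfar).le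
      have h2 : 0 ≤ h / ((m : ℝ) + 1) := by positivity
      have := mul_le_mul_of_nonneg_left h1 hb
      linarith
  refine (Finset.sum_le_sum hterm).trans ?_
  rw [Finset.sum_add_distrib, ← Finset.mul_sum, sum_bump, Finset.sum_const, Finset.card_range,
    nsmul_eq_mul]
  push_cast
  have : ((m : ℝ) + 1) * (h / (m + 1)) = h := by field_simp
  linarith

theorem eta_pos (μ : Measure ℝ) [IsProbabilityMeasure μ] (b γ : ℝ) : 0 < eta μ b γ := by
  unfold eta
  have hint : Integrable (fun x => sigmoid ((x - b) / γ)) μ := by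
    refine Integrable.of_bound
      (sigmoid_continuous.comp (by fun_prop : Continuous fun x : ℝ => (x - b) / γ)).aestronglyMeasurable
      1 ?_
    filter_upwards with x
    rw [Real.norm_eq_abs, abs_of_nonneg (sigmoid_pos _).le]
    exact sigmoid_le_one _
  rw [integral_pos_iff_support_of_nonneg (fun x => (sigmoid_pos _).le) hint]
  have : Function.support (fun x => sigmoid ((x - b) / γ)) = Set.univ := by
    ext x; simp [(sigmoid_pos _).ne']
  rw [this]
  simp

/-- The basis network is, up to the factor `-1/η`, the centred sigmoid. -/
theorem centred_sigmoid (μ : Measure ℝ) [IsProbabilityMeasure μ] (b γ x : ℝ) :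
    sigmoid ((x - b) / γ) - eta μ b γ = -eta μ b γ * basisNN μ b γ x := by
  have h := (eta_pos μ b γ).ne'
  unfold basisNN cCoef
  field_simp
  ring

theorem centred_ladder_mem (μ : Measure ℝ) [IsProbabilityMeasure μ] (m : ℕ) (a h γ : ℝ) (k : ℕ) :
    (fun x => ladder m a h γ k x - ∫ y, ladder m a h γ k y ∂μ) ∈
      Submodule.span ℝ (Set.range fun i : Fin m => basisNN μ (a + ((i : ℕ) + 1 : ℝ) * h) γ) := by
  by_cases hk : k = 0
  · have : (fun x => ladder m a h γ k x - ∫ y, ladder m a h γ k y ∂μ) = 0 := by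
      funext x; simp [ladder, hk]
    rw [this]; exact Submodule.zero_mem _
  by_cases hkm : k ≤ m
  · have : (fun x => ladder m a h γ k x - ∫ y, ladder m a h γ k y ∂μ)
        = (-eta μ (a + k * h) γ) • basisNN μ (a + k * h) γ := by
      funext x
      simp only [ladder, hk, hkm, if_true, if_false, Pi.smul_apply, smul_eq_mul]
      exact centred_sigmoid μ _ _ _
    rw [this]
    refine Submodule.smul_mem _ _ (Submodule.subset_span ⟨⟨k - 1, by omega⟩, ?_⟩)
    have : ((k - 1 : ℕ) : ℝ) + 1 = k := by
      rw [Nat.cast_sub (by omega)]; simp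
    simp only [this]
  · have : (fun x => ladder m a h γ k x - ∫ y, ladder m a h γ k y ∂μ) = 0 := by
      funext x; simp [ladder, hk, hkm]
    rw [this]; exact Submodule.zero_mem _

/-- The one-dimensional quasi-interpolant `f ↦ ∑ k, f (t k) • B k`: its `m + 1` functions `B k` lie
in the span of only `m` basis networks, it has sup-norm at most `2`, and on Lipschitz functions of
zero mean its error is of order `1/m`. -/
theorem exists_quasi_interpolant {a b : ℝ} (hab : a < b) (μ : Measure ℝ) [IsProbabilityMeasure μ]
    (hsupp : ∀ᵐ t ∂μ, t ∈ Set.Icc a b) {m : ℕ} (hm : 1 ≤ m) :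
    ∃ (bb : Fin m → ℝ) (γ : ℝ) (t : ℕ → ℝ) (B : ℕ → ℝ → ℝ), 0 < γ ∧
      (∀ k ∈ Finset.range (m + 1), t k ∈ Set.Icc a b) ∧
      (∀ k, B k ∈ Submodule.span ℝ (Set.range fun i => basisNN μ (bb i) γ)) ∧
      (∀ x, ∑ k ∈ Finset.range (m + 1), |B k x| ≤ 2) ∧
      ∀ (L : ℝ) (f : ℝ → ℝ), 0 < L →
        (∀ s ∈ Set.Icc a b, ∀ t ∈ Set.Icc a b, |f s - f t| ≤ L * |s - t|) →
        ∫ y, f y ∂μ = 0 → ∀ x ∈ Set.Icc a b,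
          |(∑ k ∈ Finset.range (m + 1), f (t k) * B k x) - f x| ≤ 6 * L * ((b - a) / m) := by
  have hm' : (0 : ℝ) < m := by exact_mod_cast hm
  obtain ⟨h, hh_def⟩ : ∃ h, h = (b - a) / m := ⟨_, rfl⟩
  have hh : 0 < h := by rw [hh_def]; exact div_pos (by linarith) hm'
  have hb : a + m * h = b := by rw [hh_def]; field_simp; ring
  obtain ⟨γ, hγ_def⟩ : ∃ γ, γ = h * (1 / ((m : ℝ) * (m + 1))) := ⟨_, rfl⟩
  have hγ : 0 < γ := by rw [hγ_def]; positivity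
  have hnode : ∀ k ∈ Finset.range (m + 1), a + (k : ℝ) * h ∈ Set.Icc a b := by
    intro k hk
    have hkr : (k : ℝ) ≤ m := by
      rw [Finset.mem_range] at hk; exact_mod_cast (by omega : k ≤ m)
    have h3 : (k : ℝ) * h ≤ m * h := mul_le_mul_of_nonneg_right hkr hh.le
    have h4 : 0 ≤ (k : ℝ) * h := by positivity
    constructor <;> linarith
  have hsumint : ∑ k ∈ Finset.range (m + 1), ∫ y, bump m a h γ k y ∂μ = 1 := by
    rw [← integral_finsetSum _ (fun k _ => bump_integrable μ m a h γ k)]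
    simp [sum_bump]
  refine ⟨fun i => a + ((i : ℕ) + 1 : ℝ) * h, γ, fun k => a + k * h,
    fun k x => bump m a h γ k x - ∫ y, bump m a h γ k y ∂μ, hγ, hnode, ?_, ?_, ?_⟩
  · intro k
    have := Submodule.sub_mem _ (centred_ladder_mem μ m a h γ k)
      (centred_ladder_mem μ m a h γ (k + 1))
    convert this using 1
    funext x
    have hi : ∫ y, bump m a h γ k y ∂μ
        = (∫ y, ladder m a h γ k y ∂μ) - ∫ y, ladder m a h γ (k + 1) y ∂μ :=
      integral_sub (ladder_integrable μ m a h γ k) (ladder_integrable μ m a h γ (k + 1))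
    beta_reduce
    rw [hi]
    simp only [Pi.sub_apply, bump]
    ring
  · intro x
    calc _ ≤ ∑ k ∈ Finset.range (m + 1), (bump m a h γ k x + ∫ y, bump m a h γ k y ∂μ) := by
          refine Finset.sum_le_sum fun k _ => ?_
          have h1 := bump_nonneg m (a := a) hh.le hγ k x
          have h2 : 0 ≤ ∫ y, bump m a h γ k y ∂μ :=
            integral_nonneg fun y => bump_nonneg m hh.le hγ k y
          rw [abs_le]; constructor <;> linarith
      _ = 2 := by rw [Finset.sum_add_distrib, sum_bump, hsumint]; norm_num
  · intro L f hL hf hf0 x hx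
    rw [← hh_def]
    -- the uncentred interpolant `A f` already has error `3 L h`
    have hA : ∀ y ∈ Set.Icc a b,
        |(∑ k ∈ Finset.range (m + 1), f (a + k * h) * bump m a h γ k y) - f y| ≤ 3 * L * h := by
      intro y hy
      have h1 : (∑ k ∈ Finset.range (m + 1), f (a + k * h) * bump m a h γ k y) - f y
          = ∑ k ∈ Finset.range (m + 1), (f (a + k * h) - f y) * bump m a h γ k y := by
        simp only [sub_mul, Finset.sum_sub_distrib]
        rw [← Finset.mul_sum, sum_bump, mul_one]
      rw [h1]
      calc _ ≤ ∑ k ∈ Finset.range (m + 1), |(f (a + k * h) - f y) * bump m a h γ k y| :=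
            Finset.abs_sum_le_sum_abs _ _
        _ ≤ ∑ k ∈ Finset.range (m + 1), L * (bump m a h γ k y * |y - (a + k * h)|) := by
            refine Finset.sum_le_sum fun k hk => ?_
            have hb0 := bump_nonneg m (a := a) hh.le hγ k y
            rw [abs_mul, abs_of_nonneg hb0]
            have := mul_le_mul_of_nonneg_right (hf _ (hnode k hk) y hy) hb0
            rw [abs_sub_comm (a + k * h) y] at this
            linarith
        _ ≤ L * (3 * h) := by
            rw [← Finset.mul_sum, hγ_def]
            exact mul_le_mul_of_nonneg_left (bump_moment hm hh (by rwa [hb])) hL.le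
        _ = 3 * L * h := by ring
    have hfint : Integrable f μ := by
      have hc : ContinuousOn f (Set.Icc a b) := by
        refine (LipschitzOnWith.of_dist_le_mul (K := ⟨L, hL.le⟩) fun s hs t ht => ?_).continuousOn
        rw [Real.dist_eq, Real.dist_eq]
        exact hf s hs t ht
      have := hc.integrableOn_compact (μ := μ) isCompact_Icc
      rwa [IntegrableOn, Measure.restrict_eq_self_of_ae_mem hsupp] at this
    have hint : ∀ k ∈ Finset.range (m + 1),
        Integrable (fun y => f (a + k * h) * bump m a h γ k y) μ :=
      fun k _ => (bump_integrable μ m a h γ k).const_mul _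
    -- the mean of `A f` is the mean of `A f - f`, hence as small as the error
    have hmean : |∑ k ∈ Finset.range (m + 1), f (a + k * h) * ∫ y, bump m a h γ k y ∂μ|
        ≤ 3 * L * h := by
      have h1 : ∑ k ∈ Finset.range (m + 1), f (a + k * h) * ∫ y, bump m a h γ k y ∂μ
          = ∫ y, ((∑ k ∈ Finset.range (m + 1), f (a + k * h) * bump m a h γ k y) - f y) ∂μ := by
        rw [integral_sub (integrable_finsetSum _ hint) hfint, hf0, sub_zero,
          integral_finsetSum _ hint]
        simp only [integral_const_mul]
      rw [h1, ← Real.norm_eq_abs]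
      refine (norm_integral_le_of_norm_le_const (C := 3 * L * h) ?_).trans (by simp)
      filter_upwards [hsupp] with y hy
      exact hA y hy
    have hsplit : (∑ k ∈ Finset.range (m + 1),
          f (a + k * h) * (bump m a h γ k x - ∫ y, bump m a h γ k y ∂μ)) - f x
        = ((∑ k ∈ Finset.range (m + 1), f (a + k * h) * bump m a h γ k x) - f x)
          - ∑ k ∈ Finset.range (m + 1), f (a + k * h) * ∫ y, bump m a h γ k y ∂μ := by
      simp only [mul_sub, Finset.sum_sub_distrib]
      ring
    rw [hsplit]
    refine (abs_sub _ _).trans ?_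
    linarith [hA x hx]

/-! ### Tensor products -/

/-- Functions `x ↦ f (x j)` of one coordinate, for `f` in the span of the `m` basis networks. -/
noncomputable def coordSpan {p m : ℕ} (μ : Fin p → Measure ℝ) (bb : Fin p → Fin m → ℝ)
    (γ : Fin p → ℝ) (j : Fin p) : Submodule ℝ ((Fin p → ℝ) → ℝ) :=
  Submodule.span ℝ (Set.range fun (i : Fin m) (x : Fin p → ℝ) => basisNN (μ j) (bb j i) (γ j) (x j))

theorem comp_mem_coordSpan {p m : ℕ} (μ : Fin p → Measure ℝ) (bb : Fin p → Fin m → ℝ)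
    (γ : Fin p → ℝ) (j : Fin p) {f : ℝ → ℝ}
    (hf : f ∈ Submodule.span ℝ (Set.range fun i => basisNN (μ j) (bb j i) (γ j))) :
    (fun x : Fin p → ℝ => f (x j)) ∈ coordSpan μ bb γ j := by
  obtain ⟨c, rfl⟩ := (Submodule.mem_span_range_iff_exists_fun ℝ).1 hf
  refine (Submodule.mem_span_range_iff_exists_fun ℝ).2 ⟨c, ?_⟩
  funext x
  simp [Finset.sum_apply]

open scoped Pointwise in
/-- An element of the product of the coordinate spans over `S` is a linear combination of `m ^ |S|`
tensor product basis functions. -/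
theorem exists_coeff_of_mem_prod {p m : ℕ} (μ : Fin p → Measure ℝ) (bb : Fin p → Fin m → ℝ)
    (γ : Fin p → ℝ) (S : Finset (Fin p)) {H : (Fin p → ℝ) → ℝ}
    (hH : H ∈ ∏ j ∈ S, coordSpan μ bb γ j) :
    ∃ c : (S → Fin m) → ℝ, ∀ x, H x =
      ∑ κ, c κ * ∏ j : S, basisNN (μ j) (bb j (κ j)) (γ j) (x j) := by
  unfold coordSpan at hH
  rw [Submodule.prod_span] at hH
  have hle : Submodule.span ℝ (∏ j ∈ S, Set.range fun (i : Fin m) (x : Fin p → ℝ) =>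
        basisNN (μ j) (bb j i) (γ j) (x j))
      ≤ Submodule.span ℝ (Set.range fun (κ : S → Fin m) (x : Fin p → ℝ) =>
        ∏ j : S, basisNN (μ j) (bb j (κ j)) (γ j) (x j)) := by
    apply Submodule.span_mono
    intro v hv
    obtain ⟨f, hf, rfl⟩ := (Set.mem_finsetProd _ _ _).1 hv
    choose κ hκ using fun j : S => hf j.2
    refine ⟨κ, ?_⟩
    funext x
    rw [Finset.prod_apply, ← Finset.prod_coe_sort S]
    exact Finset.prod_congr rfl fun j _ => congrFun (hκ j) x
  obtain ⟨c, hc⟩ := (Submodule.mem_span_range_iff_exists_fun ℝ).1 (hle hH)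
  refine ⟨c, fun x => ?_⟩
  rw [← hc]
  simp [Finset.sum_apply]

/-- Interpolating in one coordinate of `S` after another multiplies the previous error by at
most `2` and adds the one-dimensional error, because the target itself is Lipschitz and of zero mean
in every coordinate of `S`. -/
theorem tensor_approx {p : ℕ} {a b : Fin p → ℝ} (hab : ∀ j, a j < b j)
    (μ : Fin p → Measure ℝ) [∀ j, IsProbabilityMeasure (μ j)]
    (hsupp : ∀ j, ∀ᵐ t ∂(μ j), t ∈ Set.Icc (a j) (b j))
    {L D : ℝ} (hL : 0 < L) (hD0 : 0 ≤ D) (hD : ∀ j, b j - a j ≤ D)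
    (S : Finset (Fin p)) (F : (Fin p → ℝ) → ℝ)
    (hdep : ∀ x y : Fin p → ℝ, (∀ j ∈ S, x j = y j) → F x = F y)
    (hLip : ∀ j ∈ S, ∀ z : Fin p → ℝ, (∀ i, z i ∈ Set.Icc (a i) (b i)) →
      ∀ s ∈ Set.Icc (a j) (b j), ∀ t ∈ Set.Icc (a j) (b j),
        |F (Function.update z j s) - F (Function.update z j t)| ≤ L * |s - t|)
    (hstz : ∀ j ∈ S, ∀ z : Fin p → ℝ, (∀ i, z i ∈ Set.Icc (a i) (b i)) →
      ∫ t, F (Function.update z j t) ∂(μ j) = 0)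
    {m : ℕ} (hm : 1 ≤ m) :
    ∃ (bb : Fin p → Fin m → ℝ) (γ : Fin p → ℝ) (c : (S → Fin m) → ℝ), (∀ j, 0 < γ j) ∧
      ∀ x : Fin p → ℝ, (∀ j, x j ∈ Set.Icc (a j) (b j)) →
        |F x - ∑ κ, c κ * ∏ j : S, basisNN (μ j) (bb j (κ j)) (γ j) (x j)|
          ≤ 2 ^ S.card * (6 * L * (D / m)) := by
  have hm' : (0 : ℝ) < m := by exact_mod_cast hm
  choose bb γ t B hγ ht hB hB2 hQ using fun j => exists_quasi_interpolant (hab j) (μ j) (hsupp j) hm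
  have hupd : ∀ (j : Fin p) (x : Fin p → ℝ) (s : ℝ), (∀ i, x i ∈ Set.Icc (a i) (b i)) →
      s ∈ Set.Icc (a j) (b j) → ∀ i, Function.update x j s i ∈ Set.Icc (a i) (b i) := by
    intro j x s hx hs i
    by_cases hij : i = j
    · subst hij; simpa using hs
    · simpa [hij] using hx i
  -- `G` interpolates `F` in the coordinates `T`, the remaining coordinates being parameters
  have main : ∀ T : Finset (Fin p), T ⊆ S → ∃ G : (Fin p → ℝ) → ℝ,
      (∀ z, (fun x : Fin p → ℝ => G (T.piecewise x z)) ∈ ∏ j ∈ T, coordSpan μ bb γ j) ∧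
      ∀ x : Fin p → ℝ, (∀ j, x j ∈ Set.Icc (a j) (b j)) →
        |G x - F x| ≤ (2 ^ T.card - 1) * (6 * L * (D / m)) := by
    intro T
    induction T using Finset.induction_on with
    | empty =>
      intro _
      refine ⟨F, fun z => ?_, fun x _ => by simp⟩
      rw [Finset.prod_empty, Submodule.mem_one]
      exact ⟨F z, by funext x; simp⟩
    | insert j T hj ih =>
      intro hTS
      obtain ⟨G, hGmem, hGerr⟩ := ih ((Finset.subset_insert j T).trans hTS)
      have hjS : j ∈ S := hTS (Finset.mem_insert_self j T)
      refine ⟨fun x => ∑ k ∈ Finset.range (m + 1), G (Function.update x j (t j k)) * B j k (x j),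
        fun z => ?_, fun x hx => ?_⟩
      · rw [Finset.prod_insert hj]
        have hrw : (fun x : Fin p → ℝ => ∑ k ∈ Finset.range (m + 1),
            G (Function.update ((insert j T).piecewise x z) j (t j k))
              * B j k ((insert j T).piecewise x z j))
            = ∑ k ∈ Finset.range (m + 1), (fun x : Fin p → ℝ => B j k (x j)) *
              (fun x : Fin p → ℝ => G (T.piecewise x (Function.update z j (t j k)))) := by
          funext x
          rw [Finset.sum_apply]
          refine Finset.sum_congr rfl fun k _ => ?_
          have h1 : Function.update ((insert j T).piecewise x z) j (t j k)
              = T.piecewise x (Function.update z j (t j k)) := by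
            funext i
            by_cases hij : i = j
            · subst hij; simp [hj]
            · by_cases hiT : i ∈ T <;> simp [hij, hiT]
          rw [h1]
          simp [mul_comm]
        rw [hrw]
        exact Submodule.sum_mem _ fun k _ =>
          Submodule.mul_mem_mul (comp_mem_coordSpan μ bb γ j (hB j k)) (hGmem _)
      · have hε : 0 ≤ (2 ^ T.card - 1 : ℝ) * (6 * L * (D / m)) :=
          (abs_nonneg _).trans (hGerr x hx)
        have h1 := hQ j L (fun s => F (Function.update x j s)) hL (hLip j hjS x hx)
          (hstz j hjS x hx) (x j) (hx j)
        simp only [Function.update_eq_self] at h1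
        have h2 : |∑ k ∈ Finset.range (m + 1), (G (Function.update x j (t j k))
              - F (Function.update x j (t j k))) * B j k (x j)|
            ≤ (2 ^ T.card - 1) * (6 * L * (D / m)) * 2 := by
          calc _ ≤ ∑ k ∈ Finset.range (m + 1), |(G (Function.update x j (t j k))
                - F (Function.update x j (t j k))) * B j k (x j)| :=
                Finset.abs_sum_le_sum_abs _ _
            _ ≤ ∑ k ∈ Finset.range (m + 1),
                (2 ^ T.card - 1) * (6 * L * (D / m)) * |B j k (x j)| := by
                refine Finset.sum_le_sum fun k hk => ?_
                rw [abs_mul]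
                exact mul_le_mul_of_nonneg_right
                  (hGerr _ (hupd j x _ hx (ht j k hk))) (abs_nonneg _)
            _ ≤ _ := by
                rw [← Finset.mul_sum]
                exact mul_le_mul_of_nonneg_left (hB2 j (x j)) hε
        have h3 : 6 * L * ((b j - a j) / m) ≤ 6 * L * (D / m) :=
          mul_le_mul_of_nonneg_left (div_le_div_of_nonneg_right (hD j) hm'.le) (by positivity)
        have h4 : (∑ k ∈ Finset.range (m + 1), G (Function.update x j (t j k)) * B j k (x j)) - F x
            = (∑ k ∈ Finset.range (m + 1), (G (Function.update x j (t j k))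
              - F (Function.update x j (t j k))) * B j k (x j))
              + ((∑ k ∈ Finset.range (m + 1), F (Function.update x j (t j k)) * B j k (x j))
                - F x) := by
          simp only [sub_mul, Finset.sum_sub_distrib]
          ring
        rw [h4, Finset.card_insert_of_notMem hj, pow_succ]
        refine (abs_add_le _ _).trans ?_
        linarith
  obtain ⟨G, hGmem, hGerr⟩ := main S subset_rfl
  obtain ⟨c, hc⟩ := exists_coeff_of_mem_prod μ bb γ S (hGmem a)
  refine ⟨bb, γ, c, hγ, fun x hx => ?_⟩
  rw [← hc x, hdep x (S.piecewise x a) (fun j hj => by simp [hj]), abs_sub_comm]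
  have hpw : ∀ j, S.piecewise x a j ∈ Set.Icc (a j) (b j) := by
    intro j
    by_cases hj : j ∈ S
    · simpa [hj] using hx j
    · simpa [hj] using (hab j).le
  refine (hGerr _ hpw).trans (mul_le_mul_of_nonneg_right (by linarith) (by positivity))

/-! ### Counting terms -/

/-- A budget of `K` terms for a component allows `m = ⌊K^{1/|S|}⌋` nodes per coordinate; unused terms
get the coefficient `0`. -/
theorem component_approx {p : ℕ} {a b : Fin p → ℝ} (hab : ∀ j, a j < b j)
    (μ : Fin p → Measure ℝ) [∀ j, IsProbabilityMeasure (μ j)]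
    (hsupp : ∀ j, ∀ᵐ t ∂(μ j), t ∈ Set.Icc (a j) (b j))
    {L D : ℝ} (hL : 0 < L) (hD0 : 0 ≤ D) (hD : ∀ j, b j - a j ≤ D)
    (S : Finset (Fin p)) (hS : 1 ≤ S.card) (F : (Fin p → ℝ) → ℝ)
    (hdep : ∀ x y : Fin p → ℝ, (∀ j ∈ S, x j = y j) → F x = F y)
    (hLip : ∀ j ∈ S, ∀ z : Fin p → ℝ, (∀ i, z i ∈ Set.Icc (a i) (b i)) →
      ∀ s ∈ Set.Icc (a j) (b j), ∀ t ∈ Set.Icc (a j) (b j),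
        |F (Function.update z j s) - F (Function.update z j t)| ≤ L * |s - t|)
    (hstz : ∀ j ∈ S, ∀ z : Fin p → ℝ, (∀ i, z i ∈ Set.Icc (a i) (b i)) →
      ∫ t, F (Function.update z j t) ∂(μ j) = 0)
    {K : ℕ} (hK : 0 < K) :
    ∃ (β : ℕ → ℝ) (bb γγ : ℕ → Fin p → ℝ), (∀ k j, 0 < γγ k j) ∧
      ∀ x : Fin p → ℝ, (∀ j, x j ∈ Set.Icc (a j) (b j)) →
        |F x - ∑ k ∈ Finset.range K,
            β k * ∏ j ∈ S, basisNN (μ j) (bb k j) (γγ k j) (x j)|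
          ≤ 2 ^ p * (18 * L * D) * ((S.card : ℝ) / ((K : ℝ) ^ ((S.card : ℝ)⁻¹) + 1)) := by
  obtain ⟨r, hr⟩ : ∃ r : ℝ, r = (K : ℝ) ^ ((S.card : ℝ)⁻¹) := ⟨_, rfl⟩
  have hK1 : (1 : ℝ) ≤ K := by exact_mod_cast hK
  have hS' : (1 : ℝ) ≤ S.card := by exact_mod_cast hS
  have hr1 : 1 ≤ r := by rw [hr]; exact Real.one_le_rpow hK1 (by positivity)
  obtain ⟨m, hm_def⟩ : ∃ m, m = ⌊r⌋₊ := ⟨_, rfl⟩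
  have hm : 1 ≤ m := by rw [hm_def]; exact Nat.le_floor (by simpa using hr1)
  have hmr : (m : ℝ) ≤ r := by rw [hm_def]; exact Nat.floor_le (by linarith)
  have hrm : r < m + 1 := by rw [hm_def]; exact Nat.lt_floor_add_one r
  have hm1 : (1 : ℝ) ≤ m := by exact_mod_cast hm
  have hpow : m ^ S.card ≤ K := by
    have h1 : (m : ℝ) ^ S.card ≤ r ^ S.card := pow_le_pow_left₀ (by positivity) hmr _
    rw [hr, Real.rpow_inv_natCast_pow (by positivity) (by omega)] at h1
    exact_mod_cast h1
  obtain ⟨bb, γ, c, hγ, herr⟩ := tensor_approx hab μ hsupp hL hD0 hD S F hdep hLip hstz hm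
  have e : (S → Fin m) ≃ Fin (m ^ S.card) := Fintype.equivFinOfCardEq (by simp)
  refine ⟨fun k => if h : k < m ^ S.card then c (e.symm ⟨k, h⟩) else 0,
    fun k j => if h : k < m ^ S.card ∧ j ∈ S then bb j (e.symm ⟨k, h.1⟩ ⟨j, h.2⟩) else 0,
    fun _ j => γ j, fun _ j => hγ j, fun x hx => ?_⟩
  have hsum : ∑ k ∈ Finset.range K, (if h : k < m ^ S.card then c (e.symm ⟨k, h⟩) else 0) *
        ∏ j ∈ S, basisNN (μ j) (if h : k < m ^ S.card ∧ j ∈ S then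
          bb j (e.symm ⟨k, h.1⟩ ⟨j, h.2⟩) else 0) (γ j) (x j)
      = ∑ κ, c κ * ∏ j : S, basisNN (μ j) (bb j (κ j)) (γ j) (x j) := by
    rw [← Finset.sum_subset (Finset.range_subset_range.2 hpow), Finset.sum_range, ← e.symm.sum_comp]
    · refine Finset.sum_congr rfl fun i _ => ?_
      rw [dif_pos i.2, ← Finset.prod_coe_sort S]
      congr 1
      refine Finset.prod_congr rfl fun j _ => ?_
      rw [dif_pos ⟨i.2, j.2⟩]
    · intro k _ hk
      rw [dif_neg (by simpa using hk), zero_mul]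
  rw [hsum]
  refine (herr x hx).trans ?_
  rw [← hr]
  have hcard : (2 : ℝ) ^ S.card ≤ 2 ^ p :=
    pow_le_pow_right₀ (by norm_num) (by simpa using S.card_le_univ)
  have hfrac : 1 / (m : ℝ) ≤ 3 * ((S.card : ℝ) / (r + 1)) := by
    rw [← mul_div_assoc, div_le_div_iff₀ (by linarith) (by linarith)]
    nlinarith
  calc (2 : ℝ) ^ S.card * (6 * L * (D / m)) = 2 ^ S.card * (6 * L * D * (1 / m)) := by ring
    _ ≤ 2 ^ p * (6 * L * D * (3 * ((S.card : ℝ) / (r + 1)))) :=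
        mul_le_mul hcard (mul_le_mul_of_nonneg_left hfrac (by positivity)) (by positivity)
          (by positivity)
    _ = _ := by ring

/-- **Universal approximation by ANOVA-TᵈPNN** (Corollary 3.4).
Any GAᵈM function g₀ = ∑_{1 ≤ |S| ≤ d} g_{0,S} with L-Lipschitz, sum-to-zero components
can be uniformly approximated within C·∑_S |S|/(K_S^{1/|S|}+1). -/
theorem anova_tpnn_universal_approximation
    (p d : ℕ) (hp : 1 ≤ p) (hd1 : 1 ≤ d) (hdp : d ≤ p)
    (a b : Fin p → ℝ) (hab : ∀ j, a j < b j)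
    (pL pU : ℝ) (hpL : 0 < pL) (hpLU : pL ≤ pU)
    (dens : Fin p → ℝ → ℝ) (hdmeas : ∀ j, Measurable (dens j))
    (hdens : ∀ j, ∀ x ∈ Set.Icc (a j) (b j), pL ≤ dens j x ∧ dens j x ≤ pU)
    (μ : Fin p → Measure ℝ)
    (hμ : ∀ j, μ j = (volume.restrict (Set.Icc (a j) (b j))).withDensity
        (fun x => ENNReal.ofReal (dens j x)))
    [hprob : ∀ j, IsProbabilityMeasure (μ j)]
    (L : ℝ) (hL : 0 < L)
    (g : Finset (Fin p) → (Fin p → ℝ) → ℝ)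
    (hdep : ∀ S : Finset (Fin p), 1 ≤ S.card → S.card ≤ d →
      ∀ x y : Fin p → ℝ, (∀ j ∈ S, x j = y j) → g S x = g S y)
    (hLip : ∀ S : Finset (Fin p), 1 ≤ S.card → S.card ≤ d →
      ∀ x y : Fin p → ℝ, (∀ j, x j ∈ Set.Icc (a j) (b j)) →
        (∀ j, y j ∈ Set.Icc (a j) (b j)) →
        |g S x - g S y| ≤ L * Real.sqrt (∑ j ∈ S, (x j - y j) ^ 2))
    (hstz : ∀ S : Finset (Fin p), 1 ≤ S.card → S.card ≤ d → ∀ j ∈ S,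
      ∀ z : Fin p → ℝ, (∀ i, z i ∈ Set.Icc (a i) (b i)) →
      ∫ t, g S (Function.update z j t) ∂(μ j) = 0) :
    ∃ C : ℝ, 0 < C ∧ ∀ K : Finset (Fin p) → ℕ, (∀ S, 0 < K S) →
      ∃ (β : Finset (Fin p) → ℕ → ℝ) (bb γγ : Finset (Fin p) → ℕ → Fin p → ℝ),
        (∀ S k j, 0 < γγ S k j) ∧
        ∀ x : Fin p → ℝ, (∀ j, x j ∈ Set.Icc (a j) (b j)) →
          |(∑ S ∈ Finset.univ.powerset.filter
              (fun S : Finset (Fin p) => 1 ≤ S.card ∧ S.card ≤ d), g S x)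
            - ∑ S ∈ Finset.univ.powerset.filter
                (fun S : Finset (Fin p) => 1 ≤ S.card ∧ S.card ≤ d),
                ∑ k ∈ Finset.range (K S),
                  β S k * ∏ j ∈ S, basisNN (μ j) (bb S k j) (γγ S k j) (x j)|
            < C * ∑ S ∈ Finset.univ.powerset.filter
                (fun S : Finset (Fin p) => 1 ≤ S.card ∧ S.card ≤ d),
                (S.card : ℝ) / ((K S : ℝ) ^ ((S.card : ℝ)⁻¹) + 1) := by
  classical
  have hsupp : ∀ j, ∀ᵐ t ∂(μ j), t ∈ Set.Icc (a j) (b j) := by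
    intro j
    rw [hμ j]
    exact (withDensity_absolutelyContinuous _ _).ae_le (ae_restrict_mem measurableSet_Icc)
  obtain ⟨D, hD_def⟩ : ∃ D, D = ∑ j, (b j - a j) := ⟨_, rfl⟩
  have hnn : ∀ j ∈ Finset.univ, 0 ≤ b j - a j := fun j _ => by linarith [hab j]
  have hD0 : 0 ≤ D := by rw [hD_def]; exact Finset.sum_nonneg hnn
  have hD : ∀ j, b j - a j ≤ D := fun j => by
    rw [hD_def]; exact Finset.single_le_sum hnn (Finset.mem_univ j)
  -- in a single coordinate the Euclidean distance is the absolute value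
  have hLip1 : ∀ S : Finset (Fin p), 1 ≤ S.card → S.card ≤ d →
      ∀ j ∈ S, ∀ z : Fin p → ℝ, (∀ i, z i ∈ Set.Icc (a i) (b i)) →
      ∀ s ∈ Set.Icc (a j) (b j), ∀ t ∈ Set.Icc (a j) (b j),
        |g S (Function.update z j s) - g S (Function.update z j t)| ≤ L * |s - t| := by
    intro S hS1 hSd j hj z hz s hs t ht
    have hu : ∀ s ∈ Set.Icc (a j) (b j), ∀ i, Function.update z j s i ∈ Set.Icc (a i) (b i) := by
      intro s hs i
      by_cases hij : i = j
      · subst hij; simpa using hs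
      · simpa [hij] using hz i
    have h := hLip S hS1 hSd _ _ (hu s hs) (hu t ht)
    rwa [Finset.sum_eq_single_of_mem j hj (fun i _ hij => by simp [hij]),
      Function.update_self, Function.update_self, Real.sqrt_sq_eq_abs] at h
  refine ⟨2 ^ p * (18 * L * D) + 1, by positivity, fun K hK => ?_⟩
  have hex : ∀ S : Finset (Fin p), ∃ (β : ℕ → ℝ) (bb γγ : ℕ → Fin p → ℝ),
      (∀ k j, 0 < γγ k j) ∧ (1 ≤ S.card ∧ S.card ≤ d →
      ∀ x : Fin p → ℝ, (∀ j, x j ∈ Set.Icc (a j) (b j)) →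
        |g S x - ∑ k ∈ Finset.range (K S),
            β k * ∏ j ∈ S, basisNN (μ j) (bb k j) (γγ k j) (x j)|
          ≤ 2 ^ p * (18 * L * D)
            * ((S.card : ℝ) / ((K S : ℝ) ^ ((S.card : ℝ)⁻¹) + 1))) := by
    intro S
    by_cases hS : 1 ≤ S.card ∧ S.card ≤ d
    · obtain ⟨β, bb, γγ, h1, h2⟩ := component_approx hab μ hsupp hL hD0 hD S hS.1 (g S)
        (hdep S hS.1 hS.2) (hLip1 S hS.1 hS.2) (hstz S hS.1 hS.2) (hK S)
      exact ⟨β, bb, γγ, h1, fun _ => h2⟩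
    · exact ⟨0, 0, 1, fun _ _ => one_pos, fun h => absurd h hS⟩
  choose β bb γγ hγ herr using hex
  refine ⟨β, bb, γγ, hγ, fun x hx => ?_⟩
  have hpos : 0 < ∑ S ∈ Finset.univ.powerset.filter
      (fun S : Finset (Fin p) => 1 ≤ S.card ∧ S.card ≤ d),
      (S.card : ℝ) / ((K S : ℝ) ^ ((S.card : ℝ)⁻¹) + 1) := by
    refine Finset.sum_pos (fun S hS => ?_) ⟨{⟨0, hp⟩}, by simpa using hd1⟩
    have : (0 : ℝ) < S.card := by exact_mod_cast (Finset.mem_filter.1 hS).2.1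
    positivity
  rw [← Finset.sum_sub_distrib, add_mul, one_mul]
  refine ((Finset.abs_sum_le_sum_abs _ _).trans (Finset.sum_le_sum fun S hS =>
    herr S (Finset.mem_filter.1 hS).2 x hx)).trans_lt ?_
  rw [← Finset.mul_sum]
  linarith
end
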